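/- arXiv:2409.17357 — 4 statements merged into one kernel-verified Lean document; each statement's English description precedes it below -/
import Mathlib

section
/- Let λ_max > 0, λ > 0, set η = 1/(λ + λ_max), and let K be a real number with 0 < K ≤ λ_max. Then for every a ∈ [0, λ_max]: (1 − η(λ + a))² + K η² a ≤ (1 − ηλ)². -/
/-- The scalar quadratic maximization underlying the choice of step size in LiSSA:
for `η = 1/(λ + λ_max)` and `0 < K ≤ λ_max`, the quadratic
`a ↦ (1 - η(λ+a))² + Kη²a` is bounded by `(1 - ηλ)²` on `[0, λ_max]`. -/
theorem lissa_scalar_step_bound (lmax lam η K : ℝ)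
    (hlmax : 0 < lmax) (hlam : 0 < lam)
    (hη : η = 1 / (lam + lmax))
    (hK0 : 0 < K) (hK : K ≤ lmax) :
    ∀ a ∈ Set.Icc (0 : ℝ) lmax,
      (1 - η * (lam + a)) ^ 2 + K * η ^ 2 * a ≤ (1 - η * lam) ^ 2 := by
  rintro a ⟨ha0, ha⟩
  have h1 : η * (lam + lmax) = 1 := by
    rw [hη]
    exact one_div_mul_cancel (by positivity)
  -- Since `1 = η(λ + λ_max)`, the two sides differ by `η² a (2λ_max - a - K)`.
  have h2 : 0 ≤ η ^ 2 * (a * (2 * lmax - a - K)) :=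
    mul_nonneg (sq_nonneg η) (mul_nonneg ha0 (by linarith))
  have h3 : 1 - η * (lam + a) = η * (lmax - a) := by linear_combination -h1
  have h4 : 1 - η * lam = η * lmax := by linear_combination -h1
  rw [h3, h4]
  linarith
end

section
/- Let H be a symmetric positive semidefinite N×N real matrix with largest eigenvalue λ_max > 0, let λ > 0, set η = 1/(λ + λ_max), and let K be a real number with 0 < K ≤ λ_max. Then (I − η(H + λI))² + K η² H ⪯ (1 − ηλ)² · I in the positive semidefinite (Loewner) order; equivalently, the inequality (I − η(H + λI))² + Kη²H ⪯ (1 − δ)I holds with δ = 2ηλ − (ηλ)² ∈ (0,1). -/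
/-!
Diagonalizing `H` in an orthonormal eigenbasis, every polynomial in `H` becomes diagonal, so the
Loewner inequality reduces to the scalar inequality
`(1 - η (λ + a))² + K η² a ≤ (1 - η λ)²` at each eigenvalue `a`
(`posSemidef_quadratic_of_eigenvalues`). Since `η (λ + λ_max) = 1`, one has
`1 - η λ = η λ_max` and `1 - η (λ + a) = η (λ_max - a)`, so the right side minus the left side is
`η² a ((λ_max - a) + (λ_max - K))`, which is nonnegative for `0 ≤ a ≤ λ_max` and `K ≤ λ_max`
(`scalar_step_bound`). The form with `δ` is the same inequality because `1 - δ = (1 - η λ)²`.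
-/

open Matrix

theorem scalar_step_bound {a l lam η K : ℝ} (ha : 0 ≤ a) (hal : a ≤ l)
    (hsum : η * (lam + l) = 1) (hK : K ≤ l) :
    (1 - η * (a + lam)) ^ 2 + K * η ^ 2 * a ≤ (1 - η * lam) ^ 2 := by
  have h1 : 1 - η * lam = η * l := by linarith
  have h2 : 1 - η * (a + lam) = η * (l - a) := by linarith
  rw [h1, h2]
  have h3 : 0 ≤ η ^ 2 * (a * ((l - a) + (l - K))) :=
    mul_nonneg (sq_nonneg η) (mul_nonneg ha (by linarith))
  nlinarith

/-- Conjugation by the eigenvector unitary is an algebra automorphism, so the matrix expression in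
`H` is unitarily conjugate to the diagonal matrix of its values at the eigenvalues. -/
theorem posSemidef_quadratic_of_eigenvalues {N : ℕ} (H : Matrix (Fin N) (Fin N) ℝ)
    (hH : H.IsHermitian) {c η lam k : ℝ}
    (h : ∀ i, (1 - η * (hH.eigenvalues i + lam)) ^ 2 + k * hH.eigenvalues i ≤ c) :
    (c • (1 : Matrix (Fin N) (Fin N) ℝ)
      - (((1 : Matrix (Fin N) (Fin N) ℝ) - η • (H + lam • 1)) ^ 2 + k • H)).PosSemidef := by
  have hdiag : c • (1 : Matrix (Fin N) (Fin N) ℝ)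
      - ((1 - η • (diagonal hH.eigenvalues + lam • 1)) ^ 2 + k • diagonal hH.eigenvalues)
      = diagonal fun i =>
        c - ((1 - η * (hH.eigenvalues i + lam)) ^ 2 + k * hH.eigenvalues i) := by
    rw [← diagonal_one]
    simp only [← diagonal_smul, diagonal_add, diagonal_sub, diagonal_pow]
    congr 1
    ext i
    simp
  have hD : (diagonal fun i =>
      c - ((1 - η * (hH.eigenvalues i + lam)) ^ 2 + k * hH.eigenvalues i)).PosSemidef :=
    PosSemidef.diagonal fun i => sub_nonneg.2 (h i)
  have hspec : H = Unitary.conjStarAlgAut ℝ _ hH.eigenvectorUnitary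
      (diagonal hH.eigenvalues) := hH.spectral_theorem
  have hconj : c • (1 : Matrix (Fin N) (Fin N) ℝ) - ((1 - η • (H + lam • 1)) ^ 2 + k • H)
      = Unitary.conjStarAlgAut ℝ _ hH.eigenvectorUnitary (diagonal fun i =>
        c - ((1 - η * (hH.eigenvalues i + lam)) ^ 2 + k * hH.eigenvalues i)) := by
    rw [← hdiag]
    simp only [map_sub, map_add, map_smul, map_pow, map_one, ← hspec]
  rw [hconj, Unitary.conjStarAlgAut_apply]
  exact hD.mul_mul_conjTranspose_same _

/-- Matrix version of the LiSSA step-size bound: for a symmetric positive semidefinite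
`H` with largest eigenvalue `λ_max > 0`, `λ > 0`, `η = 1/(λ + λ_max)` and `0 < K ≤ λ_max`,
one has `(I − η(H + λI))² + Kη²H ⪯ (1 − ηλ)² I` in the Loewner order; equivalently
`(I − η(H + λI))² + Kη²H ⪯ (1 − δ)I` with `δ = 2ηλ − (ηλ)² ∈ (0,1)`. -/
theorem lissa_matrix_step_bound {N : ℕ}
    (H : Matrix (Fin N) (Fin N) ℝ) (hH : H.PosSemidef)
    (lmax : ℝ) (hlmax : IsGreatest (Set.range hH.1.eigenvalues) lmax) (hlmax0 : 0 < lmax)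
    (lam : ℝ) (hlam : 0 < lam)
    (η : ℝ) (hη : η = 1 / (lam + lmax))
    (K : ℝ) (hK0 : 0 < K) (hK : K ≤ lmax) :
    ((1 - η * lam) ^ 2 • (1 : Matrix (Fin N) (Fin N) ℝ)
      - (((1 : Matrix (Fin N) (Fin N) ℝ) - η • (H + lam • 1)) ^ 2 + (K * η ^ 2) • H)).PosSemidef ∧
    (0 < 2 * η * lam - (η * lam) ^ 2 ∧ 2 * η * lam - (η * lam) ^ 2 < 1) ∧
    ((1 - (2 * η * lam - (η * lam) ^ 2)) • (1 : Matrix (Fin N) (Fin N) ℝ)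
      - (((1 : Matrix (Fin N) (Fin N) ℝ) - η • (H + lam • 1)) ^ 2 + (K * η ^ 2) • H)).PosSemidef := by
  have hsum : η * (lam + lmax) = 1 := by
    rw [hη]; field_simp
  have hη0 : 0 < η := by rw [hη]; positivity
  have hηl : 0 < η * lam := mul_pos hη0 hlam
  have hηl1 : η * lam < 1 := by
    have := mul_pos hη0 hlmax0
    linarith
  have key : ((1 - η * lam) ^ 2 • (1 : Matrix (Fin N) (Fin N) ℝ)
      - (((1 : Matrix (Fin N) (Fin N) ℝ) - η • (H + lam • 1)) ^ 2
        + (K * η ^ 2) • H)).PosSemidef := by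
    apply posSemidef_quadratic_of_eigenvalues H hH.1
    intro i
    exact scalar_step_bound (hH.eigenvalues_nonneg i) (hlmax.2 ⟨i, rfl⟩) hsum hK
  refine ⟨key, ⟨by nlinarith, by nlinarith [sq_pos_of_pos (sub_pos.2 hηl1)]⟩, ?_⟩
  have hδ : 1 - (2 * η * lam - (η * lam) ^ 2) = (1 - η * lam) ^ 2 := by ring
  rw [hδ]
  exact key
end

section
/- Let p ∈ R^N with p_j > 0 for all j and Σ_j p_j = 1, and let λ > 0. Define q, r ∈ R^N elementwise by q_j = (p_j + λ)^{1/2} and r_j = p_j/(p_j + λ)^{1/2}. Then Diag(p) + λI − p pᵀ = Diag(q)·(I − r rᵀ)·Diag(q), and ‖r‖² = Σ_j p_j²/(p_j + λ) = 1 − λ·Σ_j p_j/(p_j + λ) < 1. -/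
/-!
The entries satisfy `q j * q j = p j + lam` and `q j * r j = p j`, so conjugating `I` and `r rᵀ` by
`Diag(q)` gives `Diag(p) + lam I` and `p pᵀ` respectively. The norm identity is the termwise
identity `p² / (p + lam) = p - lam * p / (p + lam)` summed against `∑ p = 1`; the strict bound
follows since the subtracted sum is positive.
-/

open Matrix

/-- Factorization of the damped Gauss–Newton Hessian of a bag-of-words model:
with `qⱼ = (pⱼ+λ)^{1/2}` and `rⱼ = pⱼ/(pⱼ+λ)^{1/2}`,
`Diag(p) + λI − p pᵀ = Diag(q) (I − r rᵀ) Diag(q)`, and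
`‖r‖² = Σⱼ pⱼ²/(pⱼ+λ) = 1 − λ Σⱼ pⱼ/(pⱼ+λ) < 1`. -/
theorem damped_softmax_hessian_factorization {N : ℕ} (p : Fin N → ℝ)
    (hp : ∀ j, 0 < p j) (hsum : ∑ j, p j = 1) (lam : ℝ) (hlam : 0 < lam)
    (q r : Fin N → ℝ)
    (hq : ∀ j, q j = Real.sqrt (p j + lam))
    (hr : ∀ j, r j = p j / Real.sqrt (p j + lam)) :
    Matrix.diagonal p + lam • (1 : Matrix (Fin N) (Fin N) ℝ) - Matrix.vecMulVec p p
      = Matrix.diagonal q *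
        ((1 : Matrix (Fin N) (Fin N) ℝ) - Matrix.vecMulVec r r) * Matrix.diagonal q ∧
    (∑ j, (r j) ^ 2) = ∑ j, (p j) ^ 2 / (p j + lam) ∧
    (∑ j, (r j) ^ 2) = 1 - lam * ∑ j, p j / (p j + lam) ∧
    (∑ j, (r j) ^ 2) < 1 := by
  have hpos : ∀ j, 0 < p j + lam := fun j => add_pos (hp j) hlam
  have hq0 : ∀ j, q j ≠ 0 := fun j => by
    rw [hq]; exact (Real.sqrt_pos.2 (hpos j)).ne'
  have hqq : ∀ j, q j * q j = p j + lam := fun j => by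
    rw [hq]; exact Real.mul_self_sqrt (hpos j).le
  have hqr : ∀ j, q j * r j = p j := fun j => by
    rw [hr, ← hq]; exact mul_div_cancel₀ _ (hq0 j)
  have hr2 : ∀ j, r j ^ 2 = p j ^ 2 / (p j + lam) := fun j => by
    rw [hr, div_pow, Real.sq_sqrt (hpos j).le]
  have hnorm : ∑ j, r j ^ 2 = 1 - lam * ∑ j, p j / (p j + lam) := by
    rw [← hsum, Finset.mul_sum, ← Finset.sum_sub_distrib]
    refine Finset.sum_congr rfl fun j _ => ?_
    have := (hpos j).ne'
    rw [hr2]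
    field_simp
    ring
  refine ⟨?_, Finset.sum_congr rfl fun j _ => hr2 j, hnorm, ?_⟩
  · ext i j
    rw [Matrix.mul_diagonal, Matrix.diagonal_mul]
    simp only [Matrix.sub_apply, Matrix.add_apply, Matrix.smul_apply, smul_eq_mul,
      Matrix.vecMulVec_apply]
    by_cases h : i = j
    · subst h
      simp only [Matrix.diagonal_apply_eq, Matrix.one_apply_eq]
      linear_combination (-1 : ℝ) * hqq i + (q i * r i + p i) * hqr i
    · simp only [Matrix.diagonal_apply_ne _ h, Matrix.one_apply_ne h]
      linear_combination q j * r j * hqr i + p i * hqr j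
  · -- The index set is nonempty because the entries of `p` sum to `1`.
    have hne : (Finset.univ : Finset (Fin N)).Nonempty := by
      by_contra h
      rw [Finset.not_nonempty_iff_eq_empty.1 h] at hsum
      simp at hsum
    have : 0 < ∑ j, p j / (p j + lam) :=
      Finset.sum_pos (fun j _ => div_pos (hp j) (hpos j)) hne
    rw [hnorm]
    linarith [mul_pos hlam this]
end

section
/- Let p ∈ R^N with p_j > 0 for all j and Σ_j p_j = 1, and let g₁, g₂ ∈ R^N satisfy Σ_j (g₁)_j = 0 and Σ_j (g₂)_j = 0. Then lim_{λ → 0⁺} g₁ᵀ (Diag(p) + λI − p pᵀ)^{-1} g₂ = g₁ᵀ Diag(p)^{-1} g₂ = Σ_j (g₁)_j (g₂)_j / p_j. -/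
/-!
For `λ > 0` write `D = Diag(p) + λI`. The system `(D - p pᵀ) x = g₂` has the Sherman–Morrison
solution `x = D⁻¹ (g₂ + c p)` with `c = pᵀ x`. Since `p / (p + λ) = 1 - λ / (p + λ)`, the
conditions `∑ p = 1` and `∑ g₂ = 0` give `1 - pᵀ D⁻¹ p = λ S` and `pᵀ D⁻¹ g₂ = -λ T₂`, where
`S = ∑ p / (p + λ)` and `Tᵢ = ∑ gᵢ / (p + λ)`. The factor `λ`, which makes the matrix degenerate
in the limit, cancels, so `c = -T₂ / S`. Using `∑ g₁ = 0` in the same way,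
`g₁ᵀ (D - p pᵀ)⁻¹ g₂ = ∑ g₁ g₂ / (p + λ) + λ T₁ T₂ / S`,
and the right-hand side is continuous at `λ = 0`, where `S = N ≠ 0`.
-/

open Matrix Filter

lemma dampedHessian_mulVec {N : ℕ} (p : Fin N → ℝ) (lam : ℝ) (x : Fin N → ℝ) (i : Fin N) :
    ((Matrix.diagonal p + lam • (1 : Matrix (Fin N) (Fin N) ℝ)
      - Matrix.vecMulVec p p) *ᵥ x) i = (p i + lam) * x i - p i * ∑ j, p j * x j := by
  simp only [Matrix.sub_mulVec, Matrix.add_mulVec, Matrix.smul_mulVec, Matrix.one_mulVec,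
    Pi.sub_apply, Pi.add_apply, Pi.smul_apply, Matrix.mulVec_diagonal, smul_eq_mul,
    Matrix.vecMulVec_mulVec, dotProduct, MulOpposite.smul_eq_mul_unop, MulOpposite.unop_op]
  ring

/-- Splitting `p / (p + λ) = 1 - λ / (p + λ)` under a weighted sum. -/
lemma sum_mul_div_add {N : ℕ} (p g : Fin N → ℝ) (hp : ∀ j, 0 < p j) {lam : ℝ} (hl : 0 < lam) :
    ∑ j, p j * (g j / (p j + lam)) = ∑ j, g j - lam * ∑ j, g j / (p j + lam) := by
  rw [Finset.mul_sum, ← Finset.sum_sub_distrib]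
  refine Finset.sum_congr rfl fun j _ => ?_
  have := (add_pos (hp j) hl).ne'
  field_simp
  ring

lemma sum_div_add_pos {N : ℕ} (p : Fin N → ℝ) (hp : ∀ j, 0 < p j) (hsum : ∑ j, p j = 1)
    {lam : ℝ} (hl : 0 < lam) : 0 < ∑ j, p j / (p j + lam) := by
  refine Finset.sum_pos (fun j _ => div_pos (hp j) (add_pos (hp j) hl)) ?_
  by_contra h
  simp [Finset.not_nonempty_iff_eq_empty.mp h] at hsum

/-- For positive damping the matrix is invertible: a kernel vector is `c D⁻¹ p` with
`c = pᵀ x`, and then `c λ S = 0`. -/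
lemma isUnit_dampedHessian {N : ℕ} (p : Fin N → ℝ) (hp : ∀ j, 0 < p j) (hsum : ∑ j, p j = 1)
    {lam : ℝ} (hl : 0 < lam) :
    IsUnit (Matrix.diagonal p + lam • (1 : Matrix (Fin N) (Fin N) ℝ)
      - Matrix.vecMulVec p p) := by
  rw [← Matrix.mulVec_injective_iff_isUnit, ← Matrix.coe_mulVecLin,
    injective_iff_map_eq_zero]
  intro x hx
  set c := ∑ j, p j * x j with hc
  have hxi : ∀ i, x i = c * (p i / (p i + lam)) := by
    intro i
    have h := congrFun hx i
    rw [Matrix.mulVecLin_apply, dampedHessian_mulVec, ← hc, Pi.zero_apply] at h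
    have := (add_pos (hp i) hl).ne'
    field_simp
    linarith
  have hS := sum_div_add_pos p hp hsum hl
  have h1 : c = c * ∑ j, p j * (p j / (p j + lam)) := by
    rw [Finset.mul_sum]
    conv_lhs => rw [hc]
    refine Finset.sum_congr rfl fun j _ => ?_
    rw [hxi j]
    ring
  rw [sum_mul_div_add p p hp hl, hsum] at h1
  have h2 : c * (lam * ∑ j, p j / (p j + lam)) = 0 := by linarith
  have h3 : c = 0 := (mul_eq_zero.mp h2).resolve_right (mul_pos hl hS).ne'
  ext i
  rw [hxi i, h3, zero_mul, Pi.zero_apply]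

/-- Closed form of the damped influence, in which the inverse power of `λ` has cancelled. -/
lemma dampedInfluence_eq {N : ℕ} (p : Fin N → ℝ)
    (hp : ∀ j, 0 < p j) (hsum : ∑ j, p j = 1)
    (g₁ g₂ : Fin N → ℝ) (hg₁ : ∑ j, g₁ j = 0) (hg₂ : ∑ j, g₂ j = 0) {lam : ℝ} (hl : 0 < lam) :
    g₁ ⬝ᵥ ((Matrix.diagonal p + lam • (1 : Matrix (Fin N) (Fin N) ℝ)
      - Matrix.vecMulVec p p)⁻¹ *ᵥ g₂) =
    ∑ j, g₁ j * g₂ j / (p j + lam) + lam * (∑ j, g₁ j / (p j + lam)) *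
      (∑ j, g₂ j / (p j + lam)) / ∑ j, p j / (p j + lam) := by
  have hS := sum_div_add_pos p hp hsum hl
  have e1 := sum_mul_div_add p g₁ hp hl
  have e2 := sum_mul_div_add p g₂ hp hl
  have e3 := sum_mul_div_add p p hp hl
  rw [hg₁] at e1
  rw [hg₂] at e2
  rw [hsum] at e3
  have hU := isUnit_dampedHessian p hp hsum hl
  set M := Matrix.diagonal p + lam • (1 : Matrix (Fin N) (Fin N) ℝ)
      - Matrix.vecMulVec p p with hM
  set S := ∑ j, p j / (p j + lam)
  set T₁ := ∑ j, g₁ j / (p j + lam)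
  set T₂ := ∑ j, g₂ j / (p j + lam)
  set c := -T₂ / S with hc
  have hcS : c * S = -T₂ := div_mul_cancel₀ _ hS.ne'
  let x : Fin N → ℝ := fun j => g₂ j / (p j + lam) + c * (p j / (p j + lam))
  have hpx : ∑ j, p j * x j = c := by
    have : ∑ j, p j * x j = ∑ j, p j * (g₂ j / (p j + lam))
        + c * ∑ j, p j * (p j / (p j + lam)) := by
      rw [Finset.mul_sum, ← Finset.sum_add_distrib]
      exact Finset.sum_congr rfl fun j _ => by simp only [x]; ring
    rw [this, e2, e3]
    linear_combination (-lam) * hcS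
  have hMx : M *ᵥ x = g₂ := by
    ext i
    rw [hM, dampedHessian_mulVec, hpx]
    have := (add_pos (hp i) hl).ne'
    simp only [x]
    field_simp
    ring
  have hinv : M⁻¹ *ᵥ g₂ = x := by
    rw [← hMx, Matrix.mulVec_mulVec,
      Matrix.nonsing_inv_mul _ ((Matrix.isUnit_iff_isUnit_det _).mp hU), Matrix.one_mulVec]
  rw [hinv]
  have : g₁ ⬝ᵥ x = ∑ j, g₁ j * g₂ j / (p j + lam)
      + c * ∑ j, p j * (g₁ j / (p j + lam)) := by
    rw [dotProduct, Finset.mul_sum, ← Finset.sum_add_distrib]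
    exact Finset.sum_congr rfl fun j _ => by simp only [x]; ring
  rw [this, e1, hc]
  ring

/-- In the bag-of-words model, for gradients `g₁, g₂` whose coordinates sum to zero,
the damped Hessian-based influence `g₁ᵀ (Diag(p) + λI − p pᵀ)⁻¹ g₂` converges, as the
damping `λ → 0⁺`, to the TF-IDF type similarity `g₁ᵀ Diag(p)⁻¹ g₂ = Σⱼ g₁ⱼ g₂ⱼ / pⱼ`. -/
theorem influence_tendsto_tfidf {N : ℕ} (p : Fin N → ℝ)
    (hp : ∀ j, 0 < p j) (hsum : ∑ j, p j = 1)
    (g₁ g₂ : Fin N → ℝ) (hg₁ : ∑ j, g₁ j = 0) (hg₂ : ∑ j, g₂ j = 0) :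
    Tendsto
      (fun lam : ℝ =>
        g₁ ⬝ᵥ ((Matrix.diagonal p + lam • (1 : Matrix (Fin N) (Fin N) ℝ)
            - Matrix.vecMulVec p p)⁻¹ *ᵥ g₂))
      (nhdsWithin 0 (Set.Ioi 0))
      (nhds (∑ j, g₁ j * g₂ j / p j)) ∧
    (∑ j, g₁ j * g₂ j / p j) = g₁ ⬝ᵥ ((Matrix.diagonal p)⁻¹ *ᵥ g₂) := by
  constructor
  · have hN : ∑ j, p j / (p j + 0) ≠ 0 := by
      have : ∀ j, p j / (p j + 0) = 1 := fun j => by rw [add_zero, div_self (hp j).ne']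
      simp only [this, Finset.sum_const, Finset.card_univ, Fintype.card_fin, nsmul_eq_mul,
        mul_one]
      rintro h
      obtain rfl : N = 0 := by exact_mod_cast h
      simp at hsum
    have hden : ∀ j, p j + 0 ≠ 0 := fun j => by rw [add_zero]; exact (hp j).ne'
    have hsumc : ∀ g : Fin N → ℝ, ContinuousAt (fun lam : ℝ => ∑ j, g j / (p j + lam)) 0 :=
      fun g => tendsto_finsetSum _ fun j _ =>
        (continuousAt_const.div (continuousAt_const.add continuousAt_id) (hden j))
    have hcont := (hsumc fun j => g₁ j * g₂ j).add
      (((continuousAt_id.mul (hsumc g₁)).mul (hsumc g₂)).div (hsumc p) hN)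
    have ht := hcont.tendsto.mono_left (nhdsWithin_le_nhds (s := Set.Ioi 0))
    simp only [Pi.add_apply, Pi.mul_apply, Pi.div_apply, id, add_zero, zero_mul, zero_div] at ht
    refine ht.congr' ?_
    filter_upwards [self_mem_nhdsWithin] with lam hl
    simpa using (dampedInfluence_eq p hp hsum g₁ g₂ hg₁ hg₂ hl).symm
  · have hinv : (Matrix.diagonal p)⁻¹ = Matrix.diagonal fun j => (p j)⁻¹ := by
      refine Matrix.inv_eq_right_inv ?_
      rw [Matrix.diagonal_mul_diagonal, ← Matrix.diagonal_one]
      congr 1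
      ext j
      exact mul_inv_cancel₀ (hp j).ne'
    rw [hinv, dotProduct]
    refine Finset.sum_congr rfl fun j _ => ?_
    rw [Matrix.mulVec_diagonal]
    ring
end
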